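/- For every n ≥ 1, all real numbers y_1, …, y_n, and all integers 1 ≤ k ≤ ℓ ≤ n with k < n, one has |s_ℓ(y)|^(1/ℓ) ≤ C · ℓ^(1/2) · max( |s_k(y)|^(1/k), |s_{k+1}(y)|^(1/(k+1)) ), where C := max( e^(4/e)·√2, 2·√7 ). -/

import Mathlib

open Finset Real

/-- The non-normalized elementary symmetric function `S_m(y)`. -/
noncomputable def esymmS (n m : ℕ) (y : Fin n → ℝ) : ℝ :=
  ∑ A ∈ powersetCard m (univ : Finset (Fin n)), ∏ i ∈ A, y i

/-- The elementary symmetric mean `s_m(y) = S_m(y) / binom(n,m)`. -/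
noncomputable def smean (n m : ℕ) (y : Fin n → ℝ) : ℝ :=
  esymmS n m y / (n.choose m)

/-!
Write `s_j` for the elementary symmetric means of a multiset of reals. By Rolle's theorem,
differentiating the polynomial with these roots gives a real-rooted polynomial, and this keeps all
means except the last; inverting the numbers reverses the sequence of means. Hence whenever
`s_a, s_{a+m} ≠ 0` the window `s_{a+j} / s_a`, `0 ≤ j ≤ m`, is itself the sequence of means of
some `m` real numbers `t_i`. AM-GM applied to the `t_i ^ 2`, whose mean is
`m s_1(t) ^ 2 - (m - 1) s_2(t)`, bounds `s_{a+m}` in terms of `s_a, s_{a+1}, s_{a+2}`.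

Suppose now `|s_j| ≤ μ ^ j` for `j = k, k + 1`. If also `|s_{k-1}| ≤ μ ^ (k-1)`, step down from `k`
to `k - 1`. Otherwise `s_{k-1}` is so large that the bound with `a = k - 1` controls `s_ℓ`.
The descent ends because `s_0 = 1 = μ ^ 0`.
-/

section Esymm

variable {R : Type*} [CommSemiring R]

lemma esymm_zero (s : Multiset R) : s.esymm 0 = 1 := by
  simp [Multiset.esymm]

lemma esymm_one (s : Multiset R) : s.esymm 1 = s.sum := by
  simp [Multiset.esymm, Multiset.powersetCard_one]

lemma esymm_card (s : Multiset R) : s.esymm s.card = s.prod := by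
  simp [Multiset.esymm, Multiset.powersetCard_self]

lemma esymm_eq_zero_of_card_lt {s : Multiset R} {j : ℕ} (h : s.card < j) : s.esymm j = 0 := by
  simp [Multiset.esymm, Multiset.powersetCard_eq_empty _ h]

lemma esymm_cons_succ (a : R) (s : Multiset R) (j : ℕ) :
    (a ::ₘ s).esymm (j + 1) = a * s.esymm j + s.esymm (j + 1) := by
  simp only [Multiset.esymm, Multiset.powersetCard_cons, Multiset.map_add, Multiset.sum_add,
    Multiset.map_map, Function.comp_def, Multiset.prod_cons, Multiset.sum_map_mul_left]
  rw [add_comm]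

lemma sum_map_sq_add_two_mul_esymm_two (s : Multiset R) :
    (s.map (· ^ 2)).sum + 2 * s.esymm 2 = s.sum ^ 2 := by
  induction s using Multiset.induction_on with
  | empty => simp [Multiset.esymm, Multiset.powersetCard_zero_right]
  | cons a s ih =>
    rw [Multiset.map_cons, Multiset.sum_cons, Multiset.sum_cons, esymm_cons_succ, esymm_one,
      add_sq, ← ih]
    ring

lemma esymm_map_inv_mul_prod {K : Type*} [Semifield K] {s : Multiset K} (hs : (0 : K) ∉ s)
    {i j : ℕ} (h : i + j = s.card) : (s.map (·⁻¹)).esymm j * s.prod = s.esymm i := by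
  induction s using Multiset.induction_on generalizing i j with
  | empty =>
    obtain ⟨rfl, rfl⟩ : i = 0 ∧ j = 0 := by simpa using h
    simp [esymm_zero]
  | cons a s ih =>
    obtain ⟨ha, hs⟩ : a ≠ 0 ∧ (0 : K) ∉ s := by simpa [eq_comm] using hs
    rw [Multiset.card_cons] at h
    rw [Multiset.map_cons, Multiset.prod_cons]
    rcases j with _ | j
    · obtain rfl : i = (a ::ₘ s).card := by simpa using h
      rw [esymm_card, esymm_zero, one_mul, Multiset.prod_cons]
    have hsplit : (a⁻¹ ::ₘ s.map (·⁻¹)).esymm (j + 1) * (a * s.prod) =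
        (s.map (·⁻¹)).esymm j * s.prod + a * ((s.map (·⁻¹)).esymm (j + 1) * s.prod) := by
      rw [esymm_cons_succ]
      field_simp
    rw [hsplit, ih hs (i := i) (by omega)]
    rcases i with _ | i
    · have hj : (s.map (·⁻¹)).card < j + 1 := by rw [Multiset.card_map]; omega
      rw [esymm_eq_zero_of_card_lt hj, zero_mul, mul_zero, add_zero, esymm_zero, esymm_zero]
    · rw [ih hs (i := i) (by omega), esymm_cons_succ, add_comm]

end Esymm

/-- The elementary symmetric mean of order `m` of a multiset: the average of the products of its
`m`-element submultisets. For `m > s.card` the quotient is `0 / 0 = 0`. -/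
noncomputable def symmMean {K : Type*} [Semifield K] (s : Multiset K) (m : ℕ) : K :=
  s.esymm m / (s.card.choose m : K)

lemma smean_eq_symmMean (n m : ℕ) (y : Fin n → ℝ) :
    smean n m y = symmMean (univ.val.map y) m := by
  rw [smean, symmMean, Finset.esymm_map_val, esymmS, Multiset.card_map, Finset.card_val,
    Finset.card_univ, Fintype.card_fin]

section SymmMean

variable {K : Type*} [Semifield K]

lemma symmMean_zero (s : Multiset K) : symmMean s 0 = 1 := by
  simp [symmMean, esymm_zero]

lemma symmMean_card (s : Multiset K) : symmMean s s.card = s.prod := by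
  simp [symmMean, esymm_card]

lemma choose_mul_symmMean [CharZero K] (s : Multiset K) (j : ℕ) :
    s.card.choose j * symmMean s j = s.esymm j := by
  rcases le_or_gt j s.card with hj | hj
  · exact mul_div_cancel₀ _ (Nat.cast_ne_zero.2 (Nat.choose_pos hj).ne')
  · rw [Nat.choose_eq_zero_of_lt hj, esymm_eq_zero_of_card_lt hj, Nat.cast_zero, zero_mul]

lemma symmMean_map_inv {s : Multiset K} (hs : s.prod ≠ 0) {i j : ℕ} (h : i + j = s.card) :
    symmMean (s.map (·⁻¹)) j = symmMean s i / s.prod := by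
  have hs₀ : (0 : K) ∉ s := fun h₀ ↦ hs (Multiset.prod_eq_zero h₀)
  rw [symmMean, symmMean, ← esymm_map_inv_mul_prod hs₀ h, Multiset.card_map,
    Nat.choose_symm_of_eq_add h.symm]
  field_simp

end SymmMean

lemma sum_map_sq_eq_card_mul {K : Type*} [Field K] [CharZero K] (s : Multiset K) :
    (s.map (· ^ 2)).sum =
      s.card * (s.card * symmMean s 1 ^ 2 - (s.card - 1) * symmMean s 2) := by
  have h₁ := choose_mul_symmMean s 1
  have h₂ := choose_mul_symmMean s 2
  rw [Nat.choose_one_right, esymm_one] at h₁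
  rw [Nat.cast_choose_two] at h₂
  rw [eq_sub_of_add_eq (sum_map_sq_add_two_mul_esymm_two s), ← h₁, ← h₂]
  ring

section RealRooted

open Polynomial

lemma splits_derivative {p : ℝ[X]} (hp : p.Splits) : p.derivative.Splits := by
  have hrolle := card_roots_le_derivative p
  have hle := card_roots' p.derivative
  rw [splits_iff_card_roots] at hp ⊢
  rw [natDegree_derivative] at hle ⊢
  omega

lemma coeff_natDegree_sub_eq_mul_symmMean_roots {K : Type*} [Field K] [CharZero K] {p : K[X]}
    (hp : p.Splits) {j : ℕ} (hj : j ≤ p.natDegree) :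
    p.coeff (p.natDegree - j) =
      p.leadingCoeff * (-1) ^ j * (p.natDegree.choose j * symmMean p.roots j) := by
  rw [coeff_eq_esymm_roots_of_splits hp (Nat.sub_le _ _), Nat.sub_sub_self hj,
    ← choose_mul_symmMean, splits_iff_card_roots.1 hp]

lemma symmMean_roots_derivative {K : Type*} [Field K] [CharZero K] {p : K[X]} (hp : p.Splits)
    (hp' : p.derivative.Splits) {j : ℕ} (hj : j < p.natDegree) :
    symmMean p.derivative.roots j = symmMean p.roots j := by
  obtain ⟨n, hn⟩ : ∃ n, p.natDegree = n + 1 := ⟨p.natDegree - 1, by omega⟩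
  have hn' : p.derivative.natDegree = n := by rw [natDegree_derivative, hn, Nat.add_sub_cancel]
  have hlead : p.derivative.leadingCoeff = p.leadingCoeff * (n + 1) := by
    rw [leadingCoeff, hn', coeff_derivative, leadingCoeff, hn]
  have hsub : n + 1 - j = n - j + 1 := by omega
  have hchoose : (n.choose j * (n + 1) : K) = (n + 1).choose j * ((n - j : ℕ) + 1) := by
    exact_mod_cast hsub ▸ Nat.choose_mul_succ_eq n j
  have hcoeff := coeff_natDegree_sub_eq_mul_symmMean_roots hp hj.le
  have hcoeff' := coeff_natDegree_sub_eq_mul_symmMean_roots hp' (j := j) (by omega)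
  rw [hn, hsub] at hcoeff
  rw [hn', hlead, coeff_derivative, hcoeff] at hcoeff'
  have hlead₀ : p.leadingCoeff ≠ 0 := leadingCoeff_ne_zero.2 (ne_zero_of_natDegree_gt hj)
  have hchoose₀ : (n.choose j : K) ≠ 0 := Nat.cast_ne_zero.2 (Nat.choose_pos (by omega)).ne'
  have hfactor : p.leadingCoeff * (-1) ^ j * (n.choose j * (n + 1)) ≠ 0 :=
    mul_ne_zero (mul_ne_zero hlead₀ (by simp)) (mul_ne_zero hchoose₀ n.cast_add_one_ne_zero)
  refine mul_left_cancel₀ hfactor ?_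
  linear_combination -hcoeff' - p.leadingCoeff * (-1) ^ j * symmMean p.roots j * hchoose

lemma exists_symmMean_eq_of_le_card (s : Multiset ℝ) {m : ℕ} (hm : m ≤ s.card) :
    ∃ t : Multiset ℝ, t.card = m ∧ ∀ j ≤ m, symmMean t j = symmMean s j := by
  induction hm using Nat.decreasingInduction with
  | self => exact ⟨s, rfl, fun _ _ ↦ rfl⟩
  | of_succ m _ ih =>
    obtain ⟨t, ht, hts⟩ := ih
    set p : ℝ[X] := (t.map (X - C ·)).prod
    have hroots : p.roots = t := roots_multiset_prod_X_sub_C t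
    have hdeg : p.natDegree = m + 1 := by rw [natDegree_multiset_prod_X_sub_C_eq_card, ht]
    have hp : p.Splits := splits_iff_card_roots.2 (by rw [hroots, hdeg, ht])
    have hp' := splits_derivative hp
    refine ⟨p.derivative.roots, ?_, fun j hj ↦ ?_⟩
    · rw [splits_iff_card_roots.1 hp', natDegree_derivative, hdeg, Nat.add_sub_cancel]
    · rw [symmMean_roots_derivative hp hp' (by omega), hroots, hts j (by omega)]

lemma exists_symmMean_eq_div (s : Multiset ℝ) {a m : ℕ} (ham : a + m ≤ s.card)
    (ha : symmMean s a ≠ 0) (hm : symmMean s (a + m) ≠ 0) :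
    ∃ t : Multiset ℝ, t.card = m ∧
      ∀ j ≤ m, symmMean t j = symmMean s (a + j) / symmMean s a := by
  obtain ⟨u, hu, hus⟩ := exists_symmMean_eq_of_le_card s ham
  have hu_prod : u.prod = symmMean s (a + m) := by rw [← symmMean_card, hu, hus _ le_rfl]
  obtain ⟨v, hv, hvu⟩ := exists_symmMean_eq_of_le_card (u.map (·⁻¹)) (m := m) (by simp [hu])
  have hvs : ∀ i j, i + j = m → symmMean v j = symmMean s (a + i) / symmMean s (a + m) := by
    intro i j hij
    rw [hvu j (by omega), symmMean_map_inv (i := a + i) (by rwa [hu_prod]) (by omega),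
      hus _ (by omega), hu_prod]
  have hv_prod : v.prod = symmMean s a / symmMean s (a + m) := by
    rw [← symmMean_card, hv, hvs 0 m (zero_add m), add_zero]
  refine ⟨v.map (·⁻¹), by rw [Multiset.card_map, hv], fun j hj ↦ ?_⟩
  rw [symmMean_map_inv (i := m - j) (by rw [hv_prod]; exact div_ne_zero ha hm) (by omega),
    hvs j (m - j) (by omega), hv_prod, div_div_div_cancel_right₀ hm]

end RealRooted

lemma prod_le_sum_div_card_pow (s : Multiset ℝ) (hs : ∀ x ∈ s, 0 ≤ x) :
    s.prod ≤ (s.sum / s.card) ^ s.card := by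
  rcases eq_or_ne s 0 with rfl | hs₀
  · simp
  have hcard : (0 : ℝ) < s.card := by exact_mod_cast Multiset.card_pos.2 hs₀
  have amgm := Real.geom_mean_le_arith_mean (univ : Finset s) (fun _ ↦ 1) (fun x ↦ (x : ℝ))
    (fun _ _ ↦ zero_le_one) (by simpa using hcard) (fun x _ ↦ hs x (Multiset.coe_mem))
  simp only [rpow_one, one_mul, sum_const, Finset.card_univ, Multiset.card_coe, nsmul_eq_mul,
    mul_one, ← Multiset.prod_eq_prod_coe, ← Multiset.sum_eq_sum_coe] at amgm
  rwa [Real.rpow_inv_le_iff_of_pos (Multiset.prod_nonneg hs)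
    (div_nonneg (Multiset.sum_nonneg hs) hcard.le) hcard, rpow_natCast] at amgm

lemma prod_sq_le_of_symmMean_le {t : Multiset ℝ} {c : ℝ} (h₁ : symmMean t 1 ^ 2 ≤ c)
    (h₂ : |symmMean t 2| ≤ c) : t.prod ^ 2 ≤ ((2 * t.card - 1) * c) ^ t.card := by
  rcases eq_or_ne t 0 with rfl | ht
  · simp
  have hcard : (1 : ℝ) ≤ t.card := by exact_mod_cast Multiset.card_pos.2 ht
  have hsq : ∀ x ∈ t.map (· ^ 2), 0 ≤ x :=
    Multiset.forall_mem_map_iff.2 fun x _ ↦ sq_nonneg x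
  calc t.prod ^ 2 = (t.map (· ^ 2)).prod := by rw [Multiset.prod_map_pow, Multiset.map_id']
    _ ≤ ((t.map (· ^ 2)).sum / t.card) ^ t.card := by
      simpa using prod_le_sum_div_card_pow _ hsq
    _ ≤ ((2 * t.card - 1) * c) ^ t.card := by
      refine pow_le_pow_left₀ (div_nonneg (Multiset.sum_nonneg hsq) (by linarith)) ?_ _
      rw [sum_map_sq_eq_card_mul, mul_div_cancel_left₀ _ (by linarith)]
      nlinarith [neg_le_of_abs_le h₂]

lemma sq_symmMean_add_le (s : Multiset ℝ) {a m : ℕ} (hm : 2 ≤ m) (ham : a + m ≤ s.card) {c : ℝ}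
    (h₀ : symmMean s a ≠ 0) (h₁ : symmMean s (a + 1) ^ 2 ≤ c * symmMean s a ^ 2)
    (h₂ : |symmMean s (a + 2)| ≤ c * |symmMean s a|) :
    symmMean s (a + m) ^ 2 ≤ ((2 * m - 1) * c) ^ m * symmMean s a ^ 2 := by
  by_cases hsm : symmMean s (a + m) = 0
  · have hc : 0 ≤ c := nonneg_of_mul_nonneg_left ((abs_nonneg _).trans h₂) (abs_pos.2 h₀)
    have hm' : (0 : ℝ) ≤ 2 * m - 1 := by
      have : (2 : ℝ) ≤ m := by exact_mod_cast hm
      linarith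
    rw [hsm, zero_pow two_ne_zero]
    positivity
  obtain ⟨t, ht, hts⟩ := exists_symmMean_eq_div s ham h₀ hsm
  have ht₁ : symmMean t 1 ^ 2 ≤ c := by
    rwa [hts 1 (by omega), div_pow, div_le_iff₀ (by positivity)]
  have ht₂ : |symmMean t 2| ≤ c := by
    rwa [hts 2 hm, abs_div, div_le_iff₀ (by positivity)]
  have hprod := prod_sq_le_of_symmMean_le ht₁ ht₂
  rwa [← symmMean_card, ht, hts m le_rfl, div_pow, div_le_iff₀ (by positivity)] at hprod

lemma sq_symmMean_le_of_pow_le (s : Multiset ℝ) {a m : ℕ} (hm : 2 ≤ m) (ham : a + m ≤ s.card)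
    {μ : ℝ} (hμ : 0 < μ) (h₀ : μ ^ a ≤ |symmMean s a|) (h₁ : |symmMean s (a + 1)| ≤ μ ^ (a + 1))
    (h₂ : |symmMean s (a + 2)| ≤ μ ^ (a + 2)) :
    symmMean s (a + m) ^ 2 ≤ (2 * m - 1) ^ m * μ ^ (2 * (a + m)) := by
  obtain ⟨p, rfl⟩ := Nat.exists_eq_add_of_le' hm
  have hp : (0 : ℝ) ≤ 2 * (p + 2 : ℕ) - 1 := by
    push_cast
    linarith [p.cast_nonneg (α := ℝ)]
  have hs : 0 < |symmMean s a| := (pow_pos hμ a).trans_le h₀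
  have key := sq_symmMean_add_le s hm ham (c := μ ^ (a + 2) / |symmMean s a|) (abs_pos.1 hs)
  rw [← sq_abs (symmMean s a)] at key
  generalize |symmMean s a| = x at key h₀ hs
  have hsq : symmMean s (a + 1) ^ 2 ≤ μ ^ (a + 2) / x * x ^ 2 := by
    calc symmMean s (a + 1) ^ 2 ≤ (μ ^ (a + 1)) ^ 2 := sq_le_sq' (abs_le.1 h₁).1 (abs_le.1 h₁).2
      _ = μ ^ (a + 2) * μ ^ a := by ring
      _ ≤ μ ^ (a + 2) * x := by gcongr
      _ = μ ^ (a + 2) / x * x ^ 2 := by field_simp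
  calc symmMean s (a + (p + 2)) ^ 2
      ≤ ((2 * (p + 2 : ℕ) - 1) * (μ ^ (a + 2) / x)) ^ (p + 2) * x ^ 2 :=
      key hsq (by rwa [div_mul_cancel₀ _ hs.ne'])
    _ = (2 * (p + 2 : ℕ) - 1) ^ (p + 2) * ((μ ^ (a + 2)) ^ (p + 2) / x ^ p) := by
      rw [mul_pow, div_pow, pow_add x]
      field_simp
    _ ≤ (2 * (p + 2 : ℕ) - 1) ^ (p + 2) * ((μ ^ (a + 2)) ^ (p + 2) / (μ ^ a) ^ p) := by gcongr
    _ = (2 * (p + 2 : ℕ) - 1) ^ (p + 2) * μ ^ (2 * (a + (p + 2))) := by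
      field_simp
      ring

lemma two_mul_sub_one_pow_le_of_le {m ℓ : ℕ} (hm : 1 ≤ m) (hmℓ : m ≤ ℓ) :
    (2 * m - 1 : ℝ) ^ m ≤ (2 * ℓ - 1) ^ ℓ := by
  have h₁ : (1 : ℝ) ≤ m := by exact_mod_cast hm
  have hle : (m : ℝ) ≤ ℓ := by exact_mod_cast hmℓ
  exact (pow_le_pow_left₀ (by linarith) (by linarith) m).trans
    (pow_le_pow_right₀ (by linarith) hmℓ)

lemma sq_symmMean_le_of_abs_le_pow (s : Multiset ℝ) {k ℓ : ℕ} (hk : 1 ≤ k) (hkℓ : k < ℓ)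
    (hℓ : ℓ ≤ s.card) {μ : ℝ} (hμ : 0 < μ) (h₁ : |symmMean s k| ≤ μ ^ k)
    (h₂ : |symmMean s (k + 1)| ≤ μ ^ (k + 1)) :
    symmMean s ℓ ^ 2 ≤ (2 * ℓ - 1) ^ ℓ * μ ^ (2 * ℓ) := by
  have of_pow_le {a : ℕ} (ha : a + 2 ≤ ℓ) (h₀ : μ ^ a ≤ |symmMean s a|)
      (h₁ : |symmMean s (a + 1)| ≤ μ ^ (a + 1)) (h₂ : |symmMean s (a + 2)| ≤ μ ^ (a + 2)) :
      symmMean s ℓ ^ 2 ≤ (2 * ℓ - 1) ^ ℓ * μ ^ (2 * ℓ) := by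
    obtain ⟨m, rfl⟩ := Nat.exists_eq_add_of_le (show a ≤ ℓ by omega)
    exact (sq_symmMean_le_of_pow_le s (by omega) hℓ hμ h₀ h₁ h₂).trans <|
      mul_le_mul_of_nonneg_right (two_mul_sub_one_pow_le_of_le (by omega) (by omega))
        (by positivity)
  induction k, hk using Nat.le_induction with
  | base => exact of_pow_le (a := 0) hkℓ (by simp [symmMean_zero]) h₁ h₂
  | succ k _ ih =>
    rcases le_total (μ ^ k) |symmMean s k| with h₀ | h₀
    · exact of_pow_le hkℓ h₀ h₁ h₂
    · exact ih (by omega) h₀ h₁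

lemma rpow_one_div_natCast_le_iff {x y : ℝ} (hx : 0 ≤ x) (hy : 0 ≤ y) {n : ℕ} (hn : n ≠ 0) :
    x ^ ((1 : ℝ) / n) ≤ y ↔ x ≤ y ^ n := by
  rw [one_div, Real.rpow_inv_le_iff_of_pos hx hy (by positivity), rpow_natCast]

theorem prev_bound_explicit_general (s : Multiset ℝ) {k ℓ : ℕ} (hk : 1 ≤ k) (hkℓ : k ≤ ℓ)
    (hℓ : ℓ ≤ s.card) :
    |symmMean s ℓ| ^ ((1 : ℝ) / ℓ) ≤ √(2 * ℓ - 1) *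
      max (|symmMean s k| ^ ((1 : ℝ) / k)) (|symmMean s (k + 1)| ^ ((1 : ℝ) / (k + 1))) := by
  have hℓ₁ : (1 : ℝ) ≤ 2 * ℓ - 1 := by
    have : (1 : ℝ) ≤ ℓ := by exact_mod_cast hk.trans hkℓ
    linarith
  have hsqrt : 1 ≤ √(2 * ℓ - 1) := one_le_sqrt.2 hℓ₁
  rcases hkℓ.eq_or_lt with rfl | hlt
  · exact (le_max_left _ _).trans (le_mul_of_one_le_left (by positivity) hsqrt)
  rw [← div_le_iff₀' (by positivity)]
  -- Work with strict upper bounds `μ` of the maximum, as the maximum itself may vanish.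
  refine le_of_forall_gt_imp_ge_of_dense fun μ hmax ↦ ?_
  obtain ⟨hμ₁, hμ₂⟩ := max_lt_iff.1 hmax
  have hμ : 0 < μ := (by positivity : (0 : ℝ) ≤ _).trans_lt hμ₁
  have h₁ : |symmMean s k| ≤ μ ^ k :=
    (rpow_one_div_natCast_le_iff (abs_nonneg _) hμ.le (by omega)).1 hμ₁.le
  have h₂ : |symmMean s (k + 1)| ≤ μ ^ (k + 1) :=
    (rpow_one_div_natCast_le_iff (abs_nonneg _) hμ.le (by omega)).1 (by exact_mod_cast hμ₂.le)
  rw [div_le_iff₀' (by positivity),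
    rpow_one_div_natCast_le_iff (abs_nonneg _) (by positivity) (by omega)]
  refine abs_le_of_sq_le_sq ?_ (by positivity)
  calc symmMean s ℓ ^ 2 ≤ (2 * ℓ - 1) ^ ℓ * μ ^ (2 * ℓ) :=
        sq_symmMean_le_of_abs_le_pow s hk hlt hℓ hμ h₁ h₂
    _ = ((√(2 * ℓ - 1) * μ) ^ ℓ) ^ 2 := by
      rw [← pow_mul, mul_comm ℓ, mul_pow, pow_mul √_, sq_sqrt (by linarith)]

lemma sqrt_two_mul_sub_one_le_max_mul_rpow (x : ℝ) :
    √(2 * x - 1) ≤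
      max (exp (4 / exp 1) * √2) (2 * √7) * x ^ ((1 : ℝ) / 2) := by
  have hexp : 1 ≤ exp (4 / exp 1) := one_le_exp (by positivity)
  calc √(2 * x - 1) ≤ √(2 * x) := sqrt_le_sqrt (by linarith)
    _ = √2 * x ^ ((1 : ℝ) / 2) := by rw [sqrt_mul zero_le_two, sqrt_eq_rpow x]
    _ ≤ _ := by
      rw [← sqrt_eq_rpow]
      gcongr
      exact (le_mul_of_one_le_left (by positivity) hexp).trans (le_max_left _ _)

theorem prev_bound_explicit :
    ∀ (n : ℕ), 1 ≤ n → ∀ (y : Fin n → ℝ) (k ℓ : ℕ),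
      1 ≤ k → k ≤ ℓ → ℓ ≤ n → k < n →
      |smean n ℓ y| ^ ((1 : ℝ) / ℓ) ≤
        max (Real.exp (4 / Real.exp 1) * Real.sqrt 2) (2 * Real.sqrt 7) *
          (ℓ : ℝ) ^ ((1 : ℝ) / 2) *
          max (|smean n k y| ^ ((1 : ℝ) / k)) (|smean n (k + 1) y| ^ ((1 : ℝ) / (k + 1))) := by
  intro n _ y k ℓ hk hkℓ hℓ _
  simp only [smean_eq_symmMean]
  refine (prev_bound_explicit_general _ hk hkℓ (by simpa using hℓ)).trans ?_
  gcongr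
  exact sqrt_two_mul_sub_one_le_max_mul_rpow ℓ
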